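/- arXiv:2410.00882 — 3 statements merged into one kernel-verified Lean document; each statement's English description precedes it below -/
import Mathlib

section
/- Let Ω be a finite set, let 0 < ε ≤ 1/2, and let p, r be probability distributions on Ω with p(x) > 0 and r(x) > 0 for all x ∈ Ω, satisfying |r(x)/p(x) − 1| ≤ ε for every x. Define b(x) := (1/(2ε))·(r(x)/p(x) − (1−ε)) and a(x) := (1−ε)/(1+ε) + (2ε/(1+ε))·b(x). Then: (i) 0 ≤ b(x) ≤ 1 and 0 ≤ a(x) ≤ 1 for every x, so all the Bernoulli acceptance probabilities used by the rejection sampler are valid; (ii) the per-iteration acceptance probability satisfies Σ_{x∈Ω} p(x)·a(x) = 1/(1+ε); and (iii) conditioned on acceptance, the distribution of the returned state is exactly r, i.e. p(x)·a(x) / (Σ_{y∈Ω} p(y)·a(y)) = r(x) for every x ∈ Ω. -/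
/-!
The two acceptance stages combine to the single acceptance probability `(r x / p x) / (1 + ε)`.
So the weight `p x * a x` of returning `x` in one iteration is `r x / (1 + ε)`, proportional to
`r x`, and the constant `1 / (1 + ε)` cancels upon conditioning on acceptance.
-/

section AcceptanceProbability

variable {𝕜 : Type*} [Field 𝕜] {ε q : 𝕜}

/-- The second-stage acceptance probability of the rejection sampler with tolerance `ε`, at a state
where the likelihood ratio `r x / p x` of target to proposal is `q`. -/
def residualAcceptProb (ε q : 𝕜) : 𝕜 :=
  (1 / (2 * ε)) * (q - (1 - ε))

/-- The overall acceptance probability in one iteration of the rejection sampler with tolerance `ε`,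
at a state of likelihood ratio `q`: accept outright with probability `(1 - ε) / (1 + ε)`, and
otherwise apply the second stage. -/
def acceptProb (ε q : 𝕜) : 𝕜 :=
  (1 - ε) / (1 + ε) + (2 * ε / (1 + ε)) * residualAcceptProb ε q

theorem acceptProb_eq_div (hε : 2 * ε ≠ 0) : acceptProb ε q = q / (1 + ε) := by
  have residual_scaled : 2 * ε * residualAcceptProb ε q = q - (1 - ε) := by
    rw [residualAcceptProb, one_div, mul_inv_cancel_left₀ hε]
  rw [acceptProb, div_mul_eq_mul_div, residual_scaled, ← add_div, add_sub_cancel]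

theorem mul_acceptProb_div {p : 𝕜} (hε : 2 * ε ≠ 0) (hp : p ≠ 0) (r : 𝕜) :
    p * acceptProb ε (r / p) = 1 / (1 + ε) * r := by
  rw [acceptProb_eq_div hε, ← mul_div_assoc, mul_div_cancel₀ r hp, one_div_mul_eq_div]

variable [LinearOrder 𝕜] [IsStrictOrderedRing 𝕜]

theorem residualAcceptProb_mem_Icc_iff (hε : 0 < ε) :
    residualAcceptProb ε q ∈ Set.Icc 0 1 ↔ |q - 1| ≤ ε := by
  have two_mul_pos : 0 < 2 * ε := by positivity
  rw [residualAcceptProb, one_div_mul_eq_div, Set.mem_Icc, le_div_iff₀ two_mul_pos,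
    div_le_one two_mul_pos, abs_le]
  constructor <;> rintro ⟨lower, upper⟩ <;> constructor <;> linarith

theorem acceptProb_mem_Icc (hε : 0 < ε) (hq : 0 ≤ q) (hq' : q ≤ 1 + ε) :
    acceptProb ε q ∈ Set.Icc 0 1 := by
  rw [acceptProb_eq_div (mul_pos two_pos hε).ne']
  exact ⟨by positivity, div_le_one_of_le₀ hq' (by positivity)⟩

end AcceptanceProbability

theorem mul_div_tsum_mul_of_hasSum_one {Ω 𝕜 : Type*} [Field 𝕜] [TopologicalSpace 𝕜]
    [IsTopologicalSemiring 𝕜] [T2Space 𝕜] {r : Ω → 𝕜} {c : 𝕜} (hr : HasSum r 1) (hc : c ≠ 0)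
    (x : Ω) : c * r x / ∑' y, c * r y = r x := by
  rw [(hr.mul_left c).tsum_eq, mul_one, mul_div_cancel_left₀ _ hc]

theorem stmt3_general {Ω 𝕜 : Type*} [Field 𝕜] [LinearOrder 𝕜] [IsStrictOrderedRing 𝕜]
    [TopologicalSpace 𝕜] [IsTopologicalSemiring 𝕜] [T2Space 𝕜] (p r : Ω → 𝕜) (ε : 𝕜) (hε : 0 < ε)
    (hp : ∀ x, 0 < p x) (hr : ∀ x, 0 ≤ r x) (hrsum : HasSum r 1)
    (happrox : ∀ x, |r x / p x - 1| ≤ ε)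
    (b a : Ω → 𝕜)
    (hb : ∀ x, b x = (1 / (2 * ε)) * (r x / p x - (1 - ε)))
    (ha : ∀ x, a x = (1 - ε) / (1 + ε) + (2 * ε / (1 + ε)) * b x) :
    (∀ x, 0 ≤ b x ∧ b x ≤ 1) ∧
    (∀ x, 0 ≤ a x ∧ a x ≤ 1) ∧
    HasSum (fun x ↦ p x * a x) (1 / (1 + ε)) ∧
    (∀ x, p x * a x / (∑' y, p y * a y) = r x) := by
  obtain rfl : b = fun x ↦ residualAcceptProb ε (r x / p x) := funext hb
  obtain rfl : a = fun x ↦ acceptProb ε (r x / p x) := funext ha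
  have accept_weight (x : Ω) : p x * acceptProb ε (r x / p x) = 1 / (1 + ε) * r x :=
    mul_acceptProb_div (by positivity) (hp x).ne' (r x)
  have ratio_le (x : Ω) : r x / p x ≤ 1 + ε :=
    sub_le_iff_le_add'.mp ((le_abs_self _).trans (happrox x))
  have hasSum_weight : HasSum (fun x ↦ 1 / (1 + ε) * r x) (1 / (1 + ε)) := by
    simpa only [mul_one] using hrsum.mul_left (1 / (1 + ε))
  simp only [accept_weight]
  exact ⟨fun x ↦ (residualAcceptProb_mem_Icc_iff hε).mpr (happrox x),
    fun x ↦ acceptProb_mem_Icc hε (div_nonneg (hr x) (hp x).le) (ratio_le x),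
    hasSum_weight, mul_div_tsum_mul_of_hasSum_one hrsum (by positivity)⟩

/-- Correctness of the acceptance probabilities in GenPerfectSamplerRS.
With `0 < ε ≤ 1/2`, probability distributions `p, r > 0` pointwise and
`|r(x)/p(x) − 1| ≤ ε` for all `x`, setting `b(x) = (1/(2ε))·(r(x)/p(x) − (1−ε))` and
`a(x) = (1−ε)/(1+ε) + (2ε/(1+ε))·b(x)`:
(i) `0 ≤ b(x) ≤ 1` and `0 ≤ a(x) ≤ 1`,
(ii) `Σ_x p(x)·a(x) = 1/(1+ε)`,
(iii) `p(x)·a(x)/(Σ_y p(y)·a(y)) = r(x)` for all `x`. -/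
theorem stmt3 {Ω : Type*} [Fintype Ω] (p r : Ω → ℝ) (ε : ℝ)
    (hε : 0 < ε) (hε' : ε ≤ 1 / 2)
    (hp : ∀ x, 0 < p x) (hpsum : ∑ x, p x = 1)
    (hr : ∀ x, 0 < r x) (hrsum : ∑ x, r x = 1)
    (happrox : ∀ x, |r x / p x - 1| ≤ ε)
    (b a : Ω → ℝ)
    (hb : ∀ x, b x = (1 / (2 * ε)) * (r x / p x - (1 - ε)))
    (ha : ∀ x, a x = (1 - ε) / (1 + ε) + (2 * ε / (1 + ε)) * b x) :
    (∀ x, 0 ≤ b x ∧ b x ≤ 1) ∧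
    (∀ x, 0 ≤ a x ∧ a x ≤ 1) ∧
    (∑ x, p x * a x = 1 / (1 + ε)) ∧
    (∀ x, p x * a x / (∑ y, p y * a y) = r x) := by
  obtain ⟨hb01, ha01, hsum, hcond⟩ := stmt3_general p r ε hε hp (fun x ↦ (hr x).le)
    (hrsum ▸ hasSum_fintype r) happrox b a hb ha
  exact ⟨hb01, ha01, (hasSum_fintype _).unique hsum, by simpa only [tsum_fintype] using hcond⟩
end

section
/- Let n ≥ 1 and let G be a bipartite graph on two vertex sets of size n, identified with a set E ⊆ Fin n × Fin n of edges. Identify perfect matchings of the complete bipartite graph K_{n,n} with permutations σ of Fin n, and assign each permutation σ the weight w(σ) := ∏_{i} λ(i, σ(i)), where λ(i,j) = 1 if (i,j) ∈ E and λ(i,j) = 1/n! otherwise. Let S_G := {σ : (i, σ(i)) ∈ E for all i} be the set of perfect matchings of G. Then: (i) w(σ) = 1 for every σ ∈ S_G; (ii) Σ_{σ ∉ S_G} w(σ) ≤ 1; and consequently (iii) if S_G is nonempty, then under the distribution on permutations proportional to w, the probability of S_G is at least |S_G|/(|S_G| + 1) ≥ 1/2, and the conditional distribution given S_G is uniform on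 S_G. -/
/-!
A matching that uses `k` non-edges weighs `ε ^ k`. Hence valid matchings weigh `1`, while each of
the at most `n!` invalid ones weighs at most `ε ≤ 1 / n!`, so that together they weigh at most `1`.
-/

section WeightedSums

open Finset

variable {ι K : Type*} [Field K] [LinearOrder K] [IsStrictOrderedRing K]

theorem one_half_le_div_add_one {x : K} (hx : 1 ≤ x) : 1 / 2 ≤ x / (x + 1) := by
  rw [div_le_div_iff₀ two_pos (by linarith)]
  linarith

theorem sum_div_sum_add_le_sum_div_sum_univ [Fintype ι] [DecidableEq ι] {s : Finset ι} {w : ι → K}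
    {δ : K} (hs : 0 < ∑ i ∈ s, w i) (hw : ∀ i ∉ s, 0 ≤ w i) (hδ : ∑ i ∈ sᶜ, w i ≤ δ) :
    (∑ i ∈ s, w i) / (∑ i ∈ s, w i + δ) ≤ (∑ i ∈ s, w i) / ∑ i, w i := by
  have hcompl : 0 ≤ ∑ i ∈ sᶜ, w i := sum_nonneg fun i hi => hw i (mem_compl.1 hi)
  rw [← sum_add_sum_compl s w]
  gcongr

end WeightedSums

section Matchings

open Finset
open scoped Nat

variable {α β R : Type*} [Fintype α] [DecidableEq α] [DecidableEq β]

/-- The weight `∏ λ(e)` of a perfect matching of the complete bipartite graph on `α` and `β`,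
encoded as a bijection `σ : α ≃ β` with edges `(i, σ i)`, where `λ` is `1` on the edges `E` of the
input graph and the penalty `ε` on its non-edges. -/
def matchingWeight [CommMonoid R] (E : Finset (α × β)) (ε : R) (σ : α ≃ β) : R :=
  ∏ i, if (i, σ i) ∈ E then 1 else ε

/-- The perfect matchings of the bipartite graph on `α` and `β` with edge set `E`, encoded as
bijections `α ≃ β`. -/
def perfectMatchings [Fintype β] (E : Finset (α × β)) : Finset (α ≃ β) :=
  {σ | ∀ i, (i, σ i) ∈ E}

theorem mem_perfectMatchings [Fintype β] {E : Finset (α × β)} {σ : α ≃ β} :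
    σ ∈ perfectMatchings E ↔ ∀ i, (i, σ i) ∈ E :=
  mem_filter_univ σ

theorem matchingWeight_eq_pow [CommMonoid R] (E : Finset (α × β)) (ε : R) (σ : α ≃ β) :
    matchingWeight E ε σ = ε ^ #{i | (i, σ i) ∉ E} := by
  rw [matchingWeight, prod_ite, prod_const_one, prod_const, one_mul]

theorem matchingWeight_of_mem_perfectMatchings [CommMonoid R] [Fintype β] {E : Finset (α × β)}
    {σ : α ≃ β} (hσ : σ ∈ perfectMatchings E) (ε : R) : matchingWeight E ε σ = 1 :=
  prod_eq_one fun i _ => if_pos (mem_perfectMatchings.1 hσ i)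

theorem sum_matchingWeight_perfectMatchings [CommSemiring R] [Fintype β] (E : Finset (α × β))
    (ε : R) : ∑ σ ∈ perfectMatchings E, matchingWeight E ε σ = #(perfectMatchings E) := by
  rw [sum_congr rfl fun σ hσ => matchingWeight_of_mem_perfectMatchings hσ ε, sum_const, nsmul_one]

theorem card_equiv_le_factorial [Fintype β] : Fintype.card (α ≃ β) ≤ (Fintype.card α)! := by
  cases isEmpty_or_nonempty (α ≃ β) with
  | inl _ => simp only [Fintype.card_eq_zero, Nat.zero_le]
  | inr h => exact (Fintype.card_equiv h.some).le

section Ordered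

variable [CommSemiring R] [PartialOrder R] [IsOrderedRing R] {ε : R}

theorem matchingWeight_nonneg (E : Finset (α × β)) (hε : 0 ≤ ε) (σ : α ≃ β) :
    0 ≤ matchingWeight E ε σ :=
  matchingWeight_eq_pow E ε σ ▸ pow_nonneg hε _

theorem matchingWeight_le_of_notMem_perfectMatchings [Fintype β] {E : Finset (α × β)} {σ : α ≃ β}
    (hσ : σ ∉ perfectMatchings E) (hε₀ : 0 ≤ ε) (hε₁ : ε ≤ 1) : matchingWeight E ε σ ≤ ε := by
  obtain ⟨i, hi⟩ : ∃ i, (i, σ i) ∉ E := by simpa only [mem_perfectMatchings, not_forall] using hσ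
  have hne : #{i | (i, σ i) ∉ E} ≠ 0 := card_ne_zero_of_mem ((mem_filter_univ i).2 hi)
  exact matchingWeight_eq_pow E ε σ ▸ pow_le_of_le_one hε₀ hε₁ hne

theorem sum_matchingWeight_compl_perfectMatchings_le [Fintype β] (E : Finset (α × β))
    (hε₀ : 0 ≤ ε) (hε₁ : ε ≤ 1) :
    ∑ σ ∈ (perfectMatchings E)ᶜ, matchingWeight E ε σ ≤ (Fintype.card α)! * ε :=
  calc ∑ σ ∈ (perfectMatchings E)ᶜ, matchingWeight E ε σ
      ≤ #(perfectMatchings E)ᶜ • ε := sum_le_card_nsmul _ _ _ fun _ hσ =>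
        matchingWeight_le_of_notMem_perfectMatchings (mem_compl.1 hσ) hε₀ hε₁
    _ ≤ (Fintype.card α)! • ε :=
        nsmul_le_nsmul_left hε₀ ((card_le_univ _).trans card_equiv_le_factorial)
    _ = (Fintype.card α)! * ε := nsmul_eq_mul _ _

end Ordered

theorem stmt15_general {K : Type*} [Field K] [LinearOrder K] [IsStrictOrderedRing K] [Fintype β]
    (E : Finset (α × β)) {ε : K} (hε₀ : 0 ≤ ε) (hε : (Fintype.card α)! * ε ≤ 1) :
    (∀ σ ∈ perfectMatchings E, matchingWeight E ε σ = 1) ∧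
    (∑ σ ∈ (perfectMatchings E)ᶜ, matchingWeight E ε σ ≤ 1) ∧
    ((perfectMatchings E).Nonempty →
      ((#(perfectMatchings E) : K) / (#(perfectMatchings E) + 1) ≤
        (∑ σ ∈ perfectMatchings E, matchingWeight E ε σ) / ∑ σ, matchingWeight E ε σ) ∧
      ((1 : K) / 2 ≤ #(perfectMatchings E) / (#(perfectMatchings E) + 1)) ∧
      (∀ σ ∈ perfectMatchings E,
        matchingWeight E ε σ / (∑ τ ∈ perfectMatchings E, matchingWeight E ε τ) =
          1 / #(perfectMatchings E))) := by
  have hε₁ : ε ≤ 1 :=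
    (le_mul_of_one_le_left hε₀ (Nat.one_le_cast.2 (Nat.factorial_pos _))).trans hε
  have hvalid : ∀ σ ∈ perfectMatchings E, matchingWeight E ε σ = 1 :=
    fun _ hσ => matchingWeight_of_mem_perfectMatchings hσ ε
  have hinvalid : ∑ σ ∈ (perfectMatchings E)ᶜ, matchingWeight E ε σ ≤ 1 :=
    (sum_matchingWeight_compl_perfectMatchings_le E hε₀ hε₁).trans hε
  have hsum := sum_matchingWeight_perfectMatchings E ε
  refine ⟨hvalid, hinvalid, fun hne => ?_⟩
  have hcard : (1 : K) ≤ #(perfectMatchings E) := Nat.one_le_cast.2 hne.card_pos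
  refine ⟨?_, one_half_le_div_add_one hcard, fun σ hσ => by rw [hvalid σ hσ, hsum]⟩
  have hpos : 0 < ∑ σ ∈ perfectMatchings E, matchingWeight E ε σ := by
    rw [hsum]
    exact one_pos.trans_le hcard
  simpa only [hsum] using sum_div_sum_add_le_sum_div_sum_univ hpos
    (fun σ _ => matchingWeight_nonneg E hε₀ σ) hinvalid

end Matchings

/-- Identify perfect matchings of `K_{n,n}` with permutations of `Fin n`,
give each permutation `σ` weight `w(σ) = ∏ i λ(i, σ i)` where `λ(i,j) = 1` for edges of
`G` and `1/n!` for non-edges. With `S_G` the set of perfect matchings of `G`: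
(i) `w(σ) = 1` on `S_G`; (ii) the total weight of permutations outside `S_G` is at
most 1; (iii) if `S_G ≠ ∅`, the weight of `S_G` in the distribution proportional to `w`
is at least `|S_G|/(|S_G|+1) ≥ 1/2`, and conditioned on `S_G` the distribution is
uniform. -/
theorem stmt15 (n : ℕ) (hn : 1 ≤ n) (E : Finset (Fin n × Fin n)) :
    ∀ (w : Equiv.Perm (Fin n) → ℝ),
      (∀ σ, w σ = ∏ i, (if (i, σ i) ∈ E then (1 : ℝ) else 1 / (n.factorial : ℝ))) →
      ∀ (S : Finset (Equiv.Perm (Fin n))),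
        (∀ σ, σ ∈ S ↔ ∀ i, (i, σ i) ∈ E) →
        ((∀ σ ∈ S, w σ = 1) ∧
         (∑ σ ∈ Finset.univ \ S, w σ ≤ 1) ∧
         (S.Nonempty →
           ((S.card : ℝ) / ((S.card : ℝ) + 1) ≤ (∑ σ ∈ S, w σ) / (∑ σ, w σ)) ∧
           ((1 : ℝ) / 2 ≤ (S.card : ℝ) / ((S.card : ℝ) + 1)) ∧
           (∀ σ ∈ S, w σ / (∑ σ' ∈ S, w σ') = 1 / (S.card : ℝ)))) := by
  intro w hw S hS
  obtain rfl : w = matchingWeight E (1 / (n.factorial : ℝ)) := funext hw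
  obtain rfl : S = perfectMatchings E := Finset.ext fun σ => (hS σ).trans mem_perfectMatchings.symm
  have hε : ((Fintype.card (Fin n)).factorial : ℝ) * (1 / n.factorial) ≤ 1 := by
    rw [Fintype.card_fin, mul_one_div_cancel (Nat.cast_ne_zero.2 n.factorial_ne_zero)]
  exact stmt15_general E (by positivity) hε
end

section
/- Let Ω be a finite set partitioned into pairwise disjoint nonempty subsets 𝒫, 𝒩_1, …, 𝒩_k, let λ : Ω → ℝ be strictly positive, write λ(S) := Σ_{M∈S} λ(M), and set w_i* := λ(𝒫)/λ(𝒩_i). Suppose the transition weights w_1, …, w_k satisfy w_i*/2 ≤ w_i ≤ 2·w_i* for every i. Define Λ(M) := λ(M) for M ∈ 𝒫 and Λ(M) := w_i·λ(M) for M ∈ 𝒩_i, and let μ(M) = Λ(M)/Σ_{M'∈Ω} Λ(M'). Then μ(𝒫) := Σ_{M∈𝒫} μ(M) ≥ 1/(1 + 2k), and also μ(𝒩_i) ≥ 1/(2(1 + 2k)) for every i. -/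
/-! Multiplying the hypothesis on `w i` by `λ(𝒩_i)` gives `λ(𝒫) / c ≤ Λ(𝒩_i) ≤ c * λ(𝒫)`, so each
class `𝒩_i` has the same total weight `Λ` as `𝒫` up to a factor `c` (`c = 2` in the algorithm). By a
union bound the total weight is then at most `(1 + c * k) * λ(𝒫)`, so `μ(𝒫) ≥ 1 / (1 + c * k)`, and
each `μ(𝒩_i)` loses at most a further factor `c`. -/

section UnionBound

open Finset

variable {ι α M : Type*} [AddCommMonoid M] [PartialOrder M] [IsOrderedAddMonoid M]
  [DecidableEq α] {f : α → M}

theorem sum_union_le_of_nonneg {s t : Finset α} (hf : ∀ x ∈ s ∩ t, 0 ≤ f x) :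
    ∑ x ∈ s ∪ t, f x ≤ ∑ x ∈ s, f x + ∑ x ∈ t, f x :=
  (le_add_of_nonneg_right (sum_nonneg hf)).trans_eq sum_union_inter

theorem sum_biUnion_le_of_nonneg {s : Finset ι} {t : ι → Finset α}
    (hf : ∀ x ∈ s.biUnion t, 0 ≤ f x) :
    ∑ x ∈ s.biUnion t, f x ≤ ∑ i ∈ s, ∑ x ∈ t i, f x := by
  have himage : s.biUnion t = (s.sigma t).image Sigma.snd := by ext; simp
  rw [himage] at hf ⊢
  exact (sum_image_le_of_nonneg hf).trans_eq (sum_sigma s t _)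

end UnionBound

section Cover

open Finset

variable {Ω ι : Type*} [Fintype Ω] [Fintype ι] {P : Finset Ω} {N : ι → Finset Ω}

theorem sum_univ_le_of_cover {R : Type*} [CommSemiring R] [PartialOrder R] [IsOrderedRing R]
    {f : Ω → R} {c : R} (hcover : ∀ x, x ∈ P ∨ ∃ i, x ∈ N i) (hf : ∀ x, 0 ≤ f x)
    (hN : ∀ i, ∑ x ∈ N i, f x ≤ c * ∑ x ∈ P, f x) :
    ∑ x, f x ≤ (1 + c * Fintype.card ι) * ∑ x ∈ P, f x := by
  classical
  have huniv : univ = P ∪ univ.biUnion N := by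
    ext x
    simpa using hcover x
  calc ∑ x, f x
      ≤ ∑ x ∈ P, f x + ∑ x ∈ univ.biUnion N, f x := by
        rw [huniv]
        exact sum_union_le_of_nonneg fun x _ => hf x
    _ ≤ ∑ x ∈ P, f x + ∑ i, ∑ x ∈ N i, f x := by
        gcongr
        exact sum_biUnion_le_of_nonneg fun x _ => hf x
    _ ≤ ∑ x ∈ P, f x + ∑ _i : ι, c * ∑ x ∈ P, f x := by
        gcongr with i
        exact hN i
    _ = (1 + c * Fintype.card ι) * ∑ x ∈ P, f x := by
        rw [sum_const, card_univ, nsmul_eq_mul]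
        ring

variable {𝕜 : Type*} [Field 𝕜] [LinearOrder 𝕜] [IsStrictOrderedRing 𝕜]

theorem one_div_le_sum_div_sum_univ_of_cover {f : Ω → 𝕜} {c : 𝕜} (hc : 0 ≤ c)
    (hcover : ∀ x, x ∈ P ∨ ∃ i, x ∈ N i) (hf : ∀ x, 0 ≤ f x) (hP : 0 < ∑ x ∈ P, f x)
    (hN : ∀ i, ∑ x ∈ N i, f x ≤ c * ∑ x ∈ P, f x) :
    1 / (1 + c * Fintype.card ι) ≤ (∑ x ∈ P, f x) / ∑ x, f x := by
  have htotal : 0 < ∑ x, f x := hP.trans_le (sum_le_univ_sum_of_nonneg hf)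
  rw [div_le_div_iff₀ (by positivity) htotal, one_mul, mul_comm]
  exact sum_univ_le_of_cover hcover hf hN

theorem one_div_mul_le_sum_div_sum_univ_of_cover {f : Ω → 𝕜} {c : 𝕜} (hc : 0 ≤ c)
    (hcover : ∀ x, x ∈ P ∨ ∃ i, x ∈ N i) (hf : ∀ x, 0 ≤ f x) (hP : 0 < ∑ x ∈ P, f x)
    (hN : ∀ i, ∑ x ∈ N i, f x ≤ c * ∑ x ∈ P, f x)
    {Q : Finset Ω} (hQ : (∑ x ∈ P, f x) / c ≤ ∑ x ∈ Q, f x) :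
    1 / (c * (1 + c * Fintype.card ι)) ≤ (∑ x ∈ Q, f x) / ∑ x, f x := by
  have htotal : 0 ≤ ∑ x, f x := sum_nonneg fun x _ => hf x
  calc 1 / (c * (1 + c * Fintype.card ι))
      = 1 / (1 + c * Fintype.card ι) / c := by rw [div_div, mul_comm]
    _ ≤ (∑ x ∈ P, f x) / (∑ x, f x) / c :=
        div_le_div_of_nonneg_right (one_div_le_sum_div_sum_univ_of_cover hc hcover hf hP hN) hc
    _ = (∑ x ∈ P, f x) / c / ∑ x, f x := div_right_comm ..
    _ ≤ (∑ x ∈ Q, f x) / ∑ x, f x := div_le_div_of_nonneg_right hQ htotal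

theorem stmt17_general {c : 𝕜} (hc : 0 < c) (hcover : ∀ x, x ∈ P ∨ ∃ i, x ∈ N i)
    {lam : Ω → 𝕜} (hlam : ∀ x, 0 ≤ lam x)
    (hP : 0 < ∑ x ∈ P, lam x) (hN : ∀ i, 0 < ∑ x ∈ N i, lam x)
    {w : ι → 𝕜} (hwlow : ∀ i, ((∑ x ∈ P, lam x) / ∑ x ∈ N i, lam x) / c ≤ w i)
    (hwhigh : ∀ i, w i ≤ c * ((∑ x ∈ P, lam x) / ∑ x ∈ N i, lam x))
    {Lam : Ω → 𝕜} (hLamP : ∀ x ∈ P, Lam x = lam x) (hLamN : ∀ i, ∀ x ∈ N i, Lam x = w i * lam x)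
    {μ : Ω → 𝕜} (hμ : ∀ x, μ x = Lam x / ∑ y, Lam y) :
    1 / (1 + c * Fintype.card ι) ≤ ∑ x ∈ P, μ x ∧
      ∀ i, 1 / (c * (1 + c * Fintype.card ι)) ≤ ∑ x ∈ N i, μ x := by
  have hw : ∀ i, 0 ≤ w i := fun i => (div_pos (div_pos hP (hN i)) hc).le.trans (hwlow i)
  have hLam : ∀ x, 0 ≤ Lam x := fun x => by
    obtain hx | ⟨i, hx⟩ := hcover x
    · exact hLamP x hx ▸ hlam x
    · exact hLamN i x hx ▸ mul_nonneg (hw i) (hlam x)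
  have hsumP : ∑ x ∈ P, Lam x = ∑ x ∈ P, lam x := sum_congr rfl hLamP
  have hsumN : ∀ i, ∑ x ∈ N i, Lam x = w i * ∑ x ∈ N i, lam x := fun i =>
    (sum_congr rfl (hLamN i)).trans (mul_sum ..).symm
  have hupper : ∀ i, ∑ x ∈ N i, Lam x ≤ c * ∑ x ∈ P, Lam x := fun i => by
    rw [hsumN, hsumP, ← le_div_iff₀ (hN i), mul_div_assoc]
    exact hwhigh i
  have hlower : ∀ i, (∑ x ∈ P, Lam x) / c ≤ ∑ x ∈ N i, Lam x := fun i => by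
    rw [hsumN, hsumP, ← div_le_iff₀ (hN i), div_right_comm]
    exact hwlow i
  have hP' : 0 < ∑ x ∈ P, Lam x := hsumP ▸ hP
  simp only [hμ, ← sum_div]
  exact ⟨one_div_le_sum_div_sum_univ_of_cover hc.le hcover hLam hP' hupper, fun i =>
    one_div_mul_le_sum_div_sum_univ_of_cover hc.le hcover hLam hP' hupper (hlower i)⟩

end Cover

/-- With `Ω` partitioned into `𝒫, 𝒩_1, …, 𝒩_k` (here `Pm`, `Nm i`),
positive `λ`, ideal weights `w_i* = λ(𝒫)/λ(𝒩_i)` and transition weights satisfying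
`w_i*/2 ≤ w_i ≤ 2·w_i*`, the stationary distribution `μ(M) ∝ Λ(M)` (with
`Λ = λ` on `𝒫`, `Λ = w_i·λ` on `𝒩_i`) satisfies `μ(𝒫) ≥ 1/(1+2k)` and
`μ(𝒩_i) ≥ 1/(2(1+2k))` for every `i`. -/
theorem stmt17 {Ω : Type*} [Fintype Ω] {k : ℕ}
    (Pm : Finset Ω) (Nm : Fin k → Finset Ω)
    (hPne : Pm.Nonempty) (hNne : ∀ i, (Nm i).Nonempty)
    (hdisjPN : ∀ i, Disjoint Pm (Nm i))
    (hdisjNN : ∀ i j, i ≠ j → Disjoint (Nm i) (Nm j))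
    (hcover : ∀ M : Ω, M ∈ Pm ∨ ∃ i, M ∈ Nm i)
    (lam : Ω → ℝ) (hlam : ∀ M, 0 < lam M)
    (w : Fin k → ℝ)
    (hwlow : ∀ i, ((∑ M ∈ Pm, lam M) / (∑ M ∈ Nm i, lam M)) / 2 ≤ w i)
    (hwhigh : ∀ i, w i ≤ 2 * ((∑ M ∈ Pm, lam M) / (∑ M ∈ Nm i, lam M)))
    (Lam : Ω → ℝ)
    (hLamP : ∀ M ∈ Pm, Lam M = lam M)
    (hLamN : ∀ i, ∀ M ∈ Nm i, Lam M = w i * lam M)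
    (μ : Ω → ℝ) (hμ : ∀ M, μ M = Lam M / ∑ M', Lam M') :
    (1 / (1 + 2 * (k : ℝ)) ≤ ∑ M ∈ Pm, μ M) ∧
    (∀ i, 1 / (2 * (1 + 2 * (k : ℝ))) ≤ ∑ M ∈ Nm i, μ M) := by
  have hsum : ∀ S : Finset Ω, S.Nonempty → 0 < ∑ M ∈ S, lam M := fun _ =>
    Finset.sum_pos fun M _ => hlam M
  simpa only [Fintype.card_fin] using stmt17_general two_pos hcover (fun M => (hlam M).le)
    (hsum Pm hPne) (fun i => hsum _ (hNne i)) hwlow hwhigh hLamP hLamN hμ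
end
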